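/- Let a ≠ b be two letters, k ≥ 2, r ≥ 5 and n ≥ 1. Then every abba-free, (k,r)-sparse sequence u with ||u|| ≤ n and |u| = r·n is isomorphic to the sequence 1^r 2^r ... n^r (i.e. u consists of n blocks, each a distinct letter repeated r times). -/

import Mathlib

/-- `u` is `(k,r)`-sparse: for every `j`, the letters at positions
`j, j+r, ..., j+(k-1)r` (those within range) are pairwise distinct. -/
def ArithSparse (k r : ℕ) (u : List ℕ) : Prop :=
  ∀ j a b : ℕ, a < b → b < k → j + b * r < u.length →
    u.getD (j + a * r) 0 ≠ u.getD (j + b * r) 0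

/-- Two sequences are isomorphic if one is obtained from the other by a
bijective renaming of letters. -/
def Isomorphic (u v : List ℕ) : Prop := ∃ β : ℕ ≃ ℕ, v = u.map β

/-- `u` contains `v` if `u` has a subsequence isomorphic to `v`. -/
def Contains (u v : List ℕ) : Prop := ∃ w : List ℕ, w.Sublist u ∧ Isomorphic w v

/-- `Ex v k r n` is the maximum length of a `v`-free, `(k,r)`-sparse sequence
using at most `n` distinct letters. -/
noncomputable def Ex (v : List ℕ) (k r n : ℕ) : ℕ :=
  sSup {l : ℕ | ∃ u : List ℕ,
    u.length = l ∧ ¬ Contains u v ∧ ArithSparse k r u ∧ u.toFinset.card ≤ n}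

/-- The sequence `1^r 2^r ⋯ n^r`. -/
def Blocks (n r : ℕ) : List ℕ := ((List.range n).map (fun i => List.replicate r (i+1))).flatten

/-!
The argument is a discharging one. If `y` occurs inside the convex hull (the *span*) of the
occurrences of `x ≠ y`, then it does so only once, since otherwise `x y y x` appears. Consequently a
position is spanned by at most two letters of multiplicity at least three: each such letter occurs
twice on one side of the position, and two letters doing so on the same side would be nested.

Sparsity makes a letter with more than `r` occurrences have at least `r` foreign positions in its
span. At most two of these carry a letter of multiplicity three or more, and those lying between its
second and its penultimate occurrence carry letters of multiplicity one. So letters that are too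
frequent are compensated by letters of multiplicity one or two, which gives `|u| ≤ r * ‖u‖`, with
equality only if every multiplicity is `r`. In that case the letter starting at a position which no
earlier letter crosses has at most one foreign position in its span, and sparsity excludes exactly
one; the letters thus form blocks, from left to right.
-/

open Finset

lemma exists_lt_mem_of_one_lt_card {ι : Type*} [LinearOrder ι] {s : Finset ι} (hs : 1 < #s) :
    ∃ a ∈ s, ∃ b ∈ s, a < b :=
  ⟨_, min'_mem s (card_pos.1 (zero_lt_one.trans hs)), _, max'_mem s _, min'_lt_max'_of_card s hs⟩

section Occurrences

variable {ι α : Type*}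

/-- The word `f`, indexed by an ordered set of positions, avoids the pattern `abba`. -/
def AbbaFree [LT ι] (f : ι → α) : Prop :=
  ∀ ⦃p q s t⦄, p < q → q < s → s < t → f p = f t → f q = f s → f p = f q

/-- The position `p` lies in the span of the letter `x`: weakly between two occurrences of `x`. -/
def Spans [LE ι] (f : ι → α) (x : α) (p : ι) : Prop :=
  ∃ a ≤ p, ∃ b ≥ p, f a = x ∧ f b = x

/-- The letter `x` spans `p` and occurs at least twice up to `p`. Applied to `f ∘ OrderDual.ofDual`,
this says that `x` spans `p` and occurs at least twice from `p` on. -/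
def LeftHeavy [Preorder ι] (f : ι → α) (p : ι) (x : α) : Prop :=
  ∃ a b c, a < b ∧ b ≤ p ∧ p ≤ c ∧ f a = x ∧ f b = x ∧ f c = x

instance [Fintype ι] [LE ι] [DecidableLE ι] [DecidableEq α] (f : ι → α) (x : α) (p : ι) :
    Decidable (Spans f x p) :=
  inferInstanceAs (Decidable (∃ a ≤ p, ∃ b ≥ p, f a = x ∧ f b = x))

variable [Fintype ι] [DecidableEq α] {f : ι → α} {x : α} {p : ι}

/-- The positions of the letter `x` in the word `f`; their number is the multiplicity of `x`. -/
def occurrences (f : ι → α) (x : α) : Finset ι := {p | f p = x}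

lemma mem_occurrences : p ∈ occurrences f x ↔ f p = x := by simp [occurrences]

lemma card_occurrences_pos (f : ι → α) (p : ι) : 0 < #(occurrences f (f p)) :=
  card_pos.2 ⟨p, mem_occurrences.2 rfl⟩

variable [LinearOrder ι]

/-- The letters of multiplicity at least three whose span contains the position `p`. -/
def heavySpanning (f : ι → α) (p : ι) : Finset α :=
  {x ∈ univ.image f | 3 ≤ #(occurrences f x) ∧ Spans f x p}

/-- The positions in the span of `x` which carry another letter, of multiplicity at least three. -/
def heavyForeign (f : ι → α) (x : α) : Finset ι :=
  {p | Spans f x p ∧ f p ≠ x ∧ 3 ≤ #(occurrences f (f p))}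

lemma mem_heavySpanning :
    x ∈ heavySpanning f p ↔ 3 ≤ #(occurrences f x) ∧ Spans f x p := by
  simp only [heavySpanning, mem_filter, mem_image, mem_univ, true_and, and_iff_right_iff_imp]
  rintro ⟨-, a, -, -, -, rfl, -⟩
  exact ⟨a, rfl⟩

lemma Spans.leftHeavy_or (hx : Spans f x p) (hthree : 3 ≤ #(occurrences f x)) :
    LeftHeavy f p x ∨ LeftHeavy (f ∘ OrderDual.ofDual) (OrderDual.toDual p) x := by
  obtain ⟨a, hap, b, hpb, ha, hb⟩ := hx
  have hsplit := card_filter_add_card_filter_not (s := occurrences f x) (· ≤ p)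
  by_cases hleft : 1 < #{q ∈ occurrences f x | q ≤ p}
  · obtain ⟨c, hc, d, hd, hcd⟩ := exists_lt_mem_of_one_lt_card hleft
    rw [mem_filter, mem_occurrences] at hc hd
    exact .inl ⟨c, d, b, hcd, hd.2, hpb, hc.1, hd.1, hb⟩
  · obtain ⟨c, hc, d, hd, hcd⟩ :=
      exists_lt_mem_of_one_lt_card (s := {q ∈ occurrences f x | ¬ q ≤ p}) (by omega)
    rw [mem_filter, mem_occurrences] at hc hd
    exact .inr ⟨.toDual d, .toDual c, .toDual a, hcd, (not_le.1 hc.2).le, hap, hd.1, hc.1, ha⟩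

lemma exists_isLeast_isGreatest_occurrences (hx : 0 < #(occurrences f x)) :
    ∃ a b, IsLeast (occurrences f x : Set ι) a ∧ IsGreatest (occurrences f x : Set ι) b :=
  ⟨_, _, isLeast_min' _ (card_pos.1 hx), isGreatest_max' _ (card_pos.1 hx)⟩

lemma isLeast_occurrences_of_cut (hcut : ∀ q < p, ∀ s ≥ p, f q ≠ f s) :
    IsLeast (occurrences f (f p) : Set ι) p :=
  ⟨mem_occurrences.2 rfl,
    fun q hq ↦ not_lt.1 fun hqp ↦ hcut q hqp p le_rfl (mem_occurrences.1 hq)⟩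

lemma spans_iff_mem_Icc {a b : ι} (ha : IsLeast (occurrences f x : Set ι) a)
    (hb : IsGreatest (occurrences f x : Set ι) b) : Spans f x p ↔ a ≤ p ∧ p ≤ b := by
  constructor
  · rintro ⟨c, hcp, d, hpd, hc, hd⟩
    exact ⟨(ha.2 (mem_occurrences.2 hc)).trans hcp, hpd.trans (hb.2 (mem_occurrences.2 hd))⟩
  · rintro ⟨hap, hpb⟩
    exact ⟨a, hap, b, hpb, mem_occurrences.1 ha.1, mem_occurrences.1 hb.1⟩

end Occurrences

namespace AbbaFree

variable {ι α : Type*} [LinearOrder ι] {f : ι → α} {x y : α} {p q : ι}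

lemma comp_ofDual (hf : AbbaFree f) : AbbaFree (f ∘ OrderDual.ofDual) :=
  fun _ _ _ _ hpq hqs hst hpt hqs' ↦ hpt.trans ((hf hst hqs hpq hpt.symm hqs'.symm).trans hqs'.symm)

lemma eq_of_spans (hf : AbbaFree f) (hp : Spans f x p) (hq : Spans f x q) (hpx : f p ≠ x)
    (hpq : f p = f q) : p = q := by
  wlog hlt : p < q generalizing p q
  · rcases (not_lt.1 hlt).eq_or_lt with heq | hgt
    · exact heq.symm
    · exact (this hq hp (hpq ▸ hpx) hpq.symm hgt).symm
  obtain ⟨a, hap, -, -, rfl, -⟩ := hp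
  obtain ⟨-, -, b, hqb, -, hb⟩ := hq
  have hap' : a < p := hap.lt_of_ne (by rintro rfl; exact hpx rfl)
  have hqb' : q < b := hqb.lt_of_ne (by rintro rfl; exact hpx (hpq.trans hb))
  exact absurd (hf hap' hlt hqb' hb.symm hpq).symm hpx

lemma eq_of_mem_inner_gap (hf : AbbaFree f) {a a' b' b : ι} (haa' : a < a') (hap : a' < p)
    (hpb : p < b') (hbb' : b' < b) (ha : f a = x) (ha' : f a' = x) (hb' : f b' = x) (hb : f b = x)
    (hpx : f p ≠ x) (hpq : f p = f q) : p = q := by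
  by_contra hne
  have hp : Spans f x p := ⟨a, (haa'.trans hap).le, b, (hpb.trans hbb').le, ha, hb⟩
  have hq : ¬ Spans f x q := fun hq ↦ hne (hf.eq_of_spans hp hq hpx hpq)
  rcases lt_or_ge q a with hqa | haq
  · exact hpx (hpq.trans ((hf hqa haa' hap hpq.symm (ha.trans ha'.symm)).trans ha))
  · have hbq : b < q := not_le.1 fun hqb ↦ hq ⟨a, haq, b, hqb, ha, hb⟩
    exact hpx ((hf hpb hbb' hbq hpq (hb'.trans hb.symm)).trans hb')

lemma eq_of_leftHeavy (hf : AbbaFree f) (hx : LeftHeavy f p x) (hy : LeftHeavy f p y) :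
    x = y := by
  obtain ⟨a, b, c, hab, hbp, hpc, ha, hb, hc⟩ := hx
  obtain ⟨a', b', c', hab', hbp', hpc', ha', hb', hc'⟩ := hy
  wlog haa' : a ≤ a' generalizing x y a b c a' b' c'
  · exact (this _ _ _ hab' hbp' hpc' ha' hb' hc' _ _ _ hab hbp hpc ha hb hc
      (le_of_not_ge haa')).symm
  rcases haa'.eq_or_lt with rfl | haa'
  · exact ha.symm.trans ha'
  rcases (hbp'.trans hpc).eq_or_lt with rfl | hbc
  · exact hc.symm.trans hb'
  exact ha.symm.trans ((hf haa' hab' hbc (ha.trans hc.symm) (ha'.trans hb'.symm)).trans ha')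

variable [Fintype ι] [DecidableEq α]

lemma card_heavySpanning_le_two (hf : AbbaFree f) (p : ι) : #(heavySpanning f p) ≤ 2 := by
  classical
  let left : Finset α := {x ∈ heavySpanning f p | LeftHeavy f p x}
  let right : Finset α :=
    {x ∈ heavySpanning f p | LeftHeavy (f ∘ OrderDual.ofDual) (OrderDual.toDual p) x}
  have hleft : #left ≤ 1 := card_le_one.2 fun x hx y hy ↦
    hf.eq_of_leftHeavy (mem_filter.1 hx).2 (mem_filter.1 hy).2
  have hright : #right ≤ 1 := card_le_one.2 fun x hx y hy ↦
    hf.comp_ofDual.eq_of_leftHeavy (mem_filter.1 hx).2 (mem_filter.1 hy).2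
  have hcover : heavySpanning f p ⊆ left ∪ right := by
    intro x hx
    obtain ⟨hthree, hspan⟩ := mem_heavySpanning.1 hx
    rw [mem_union, mem_filter, mem_filter]
    exact (hspan.leftHeavy_or hthree).imp (⟨hx, ·⟩) (⟨hx, ·⟩)
  calc #(heavySpanning f p) ≤ #(left ∪ right) := card_le_card hcover
    _ ≤ #left + #right := card_union_le left right
    _ ≤ 2 := by omega

lemma card_heavySpanning_erase_le_one (hf : AbbaFree f) (hx : x ∈ heavySpanning f p) :
    #((heavySpanning f p).erase x) ≤ 1 := by
  have := hf.card_heavySpanning_le_two p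
  rw [card_erase_of_mem hx]
  omega

lemma injOn_heavyForeign (hf : AbbaFree f) : Set.InjOn f (heavyForeign f x : Set ι) := by
  intro p hp q hq hpq
  obtain ⟨-, hp, hpx, -⟩ := mem_filter.1 hp
  exact hf.eq_of_spans hp (mem_filter.1 hq).2.1 hpx hpq

-- A letter occurring once in the span of `x` occurs elsewhere, so it crosses an end of that span.
lemma image_heavyForeign_subset (hf : AbbaFree f) {a b : ι}
    (ha : IsLeast (occurrences f x : Set ι) a) (hb : IsGreatest (occurrences f x : Set ι) b) :
    (heavyForeign f x).image f ⊆ (heavySpanning f a).erase x ∪ (heavySpanning f b).erase x := by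
  intro y hy
  obtain ⟨p, hp, rfl⟩ := mem_image.1 hy
  obtain ⟨-, hspan, hpx, hthree⟩ := mem_filter.1 hp
  obtain ⟨q, hq, hqp⟩ := exists_mem_ne (s := occurrences f (f p)) (by omega) p
  rw [mem_occurrences] at hq
  have hnot : ¬ Spans f x q := fun h ↦ hqp (hf.eq_of_spans hspan h hpx hq.symm).symm
  rw [spans_iff_mem_Icc ha hb] at hspan hnot
  simp only [mem_union, mem_erase, mem_heavySpanning]
  rcases lt_or_ge q a with hqa | haq
  · exact .inl ⟨hpx, hthree, q, hqa.le, p, hspan.1, hq, rfl⟩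
  · exact .inr ⟨hpx, hthree, p, hspan.2, q, (not_le.1 fun hqb ↦ hnot ⟨haq, hqb⟩).le, rfl, hq⟩

lemma card_heavyForeign_le_two (hf : AbbaFree f) (hx : 3 ≤ #(occurrences f x)) :
    #(heavyForeign f x) ≤ 2 := by
  obtain ⟨a, b, ha, hb⟩ := exists_isLeast_isGreatest_occurrences (by omega : 0 < #(occurrences f x))
  have hxa : x ∈ heavySpanning f a :=
    mem_heavySpanning.2 ⟨hx, (spans_iff_mem_Icc ha hb).2 ⟨le_rfl, ha.2 hb.1⟩⟩
  have hxb : x ∈ heavySpanning f b :=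
    mem_heavySpanning.2 ⟨hx, (spans_iff_mem_Icc ha hb).2 ⟨ha.2 hb.1, le_rfl⟩⟩
  calc #(heavyForeign f x) = #((heavyForeign f x).image f) :=
        (card_image_of_injOn hf.injOn_heavyForeign).symm
    _ ≤ #((heavySpanning f a).erase x) + #((heavySpanning f b).erase x) :=
        (card_le_card (hf.image_heavyForeign_subset ha hb)).trans (card_union_le _ _)
    _ ≤ 2 := by
        have := hf.card_heavySpanning_erase_le_one hxa
        have := hf.card_heavySpanning_erase_le_one hxb
        omega

lemma card_heavyForeign_le_one (hf : AbbaFree f) (hp : 3 ≤ #(occurrences f (f p)))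
    (hcut : ∀ q < p, ∀ s ≥ p, f q ≠ f s) : #(heavyForeign f (f p)) ≤ 1 := by
  obtain ⟨-, b, -, hb⟩ := exists_isLeast_isGreatest_occurrences (card_occurrences_pos f p)
  have hpleast := isLeast_occurrences_of_cut hcut
  have hspan : Spans f (f p) b :=
    (spans_iff_mem_Icc hpleast hb).2 ⟨hpleast.2 hb.1, le_rfl⟩
  have hempty : (heavySpanning f p).erase (f p) = ∅ := by
    refine eq_empty_of_forall_notMem fun y hy ↦ ?_
    obtain ⟨hyp, hy⟩ := mem_erase.1 hy
    obtain ⟨-, q, hqp, s, hps, hq, hs⟩ := mem_heavySpanning.1 hy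
    rcases hqp.eq_or_lt with rfl | hqp
    · exact hyp hq.symm
    · exact hcut q hqp s hps (hq.trans hs.symm)
  have hsub := hf.image_heavyForeign_subset hpleast hb
  rw [hempty, empty_union] at hsub
  rw [← card_image_of_injOn hf.injOn_heavyForeign]
  exact (card_le_card hsub).trans
    (hf.card_heavySpanning_erase_le_one (mem_heavySpanning.2 ⟨hp, hspan⟩))

end AbbaFree

/-- `f` is `(2, r)`-sparse: positions at distance `r` carry different letters. -/
def ShiftSparse {α : Type*} {L : ℕ} (r : ℕ) (f : Fin L → α) : Prop :=
  ∀ i j : Fin L, (j : ℕ) = i + r → f i ≠ f j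

namespace ShiftSparse

variable {α : Type*} [DecidableEq α] {L r : ℕ} {f : Fin L → α} {x : α}

lemma card_occurrences_window_le (hf : ShiftSparse r f) (x : α) (a : Fin L) :
    #{p ∈ occurrences f x | a ≤ p ∧ (p : ℕ) < a + 2 * r} ≤ r := by
  conv_rhs => rw [← card_range r]
  refine card_le_card_of_forall_subsingleton
    (fun (p : Fin L) i ↦ (p : ℕ) = a + i ∨ (p : ℕ) = a + i + r) (fun p hp ↦ ?_)
    fun i _ p hp q hq ↦ ?_
  · obtain ⟨-, hap, hp⟩ := mem_filter.1 hp
    rw [Fin.le_def] at hap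
    by_cases hpr : (p : ℕ) < a + r
    · exact ⟨p - a, mem_range.2 (by omega), by omega⟩
    · exact ⟨p - a - r, mem_range.2 (by omega), by omega⟩
  · have hpq : f p = f q := by
      rw [mem_occurrences.1 (mem_filter.1 hp.1).1, mem_occurrences.1 (mem_filter.1 hq.1).1]
    have hne : (q : ℕ) ≠ p + r := fun h ↦ hf p q h hpq
    have hne' : (p : ℕ) ≠ q + r := fun h ↦ hf q p h hpq.symm
    have hp := hp.2
    have hq := hq.2
    omega

lemma le_card_foreign (hf : ShiftSparse r f) (hx : r < #(occurrences f x)) :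
    r ≤ #{p | Spans f x p ∧ f p ≠ x} := by
  obtain ⟨a, b, ha, hb⟩ := exists_isLeast_isGreatest_occurrences (by omega : 0 < #(occurrences f x))
  have hwindow := hf.card_occurrences_window_le x a
  have hlong : (a : ℕ) + 2 * r ≤ b := by
    by_contra! hshort
    refine hx.not_ge (le_trans (card_le_card fun p hp ↦ mem_filter.2 ⟨hp, ha.2 hp, ?_⟩) hwindow)
    exact lt_of_le_of_lt (hb.2 hp) hshort
  let c : Fin L := ⟨a + 2 * r, by omega⟩
  have hsplit : #{p ∈ Ico a c | f p = x} + #{p ∈ Ico a c | f p ≠ x} = 2 * r := by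
    rw [card_filter_add_card_filter_not, Fin.card_Ico]
    exact Nat.add_sub_cancel_left _ _
  have hown : #{p ∈ Ico a c | f p = x} ≤ r := by
    refine le_trans (card_le_card fun p hp ↦ ?_) hwindow
    obtain ⟨hp, hpx⟩ := mem_filter.1 hp
    exact mem_filter.2 ⟨mem_occurrences.2 hpx, mem_Ico.1 hp⟩
  have hforeign : #{p ∈ Ico a c | f p ≠ x} ≤ #{p | Spans f x p ∧ f p ≠ x} := by
    refine card_le_card fun p hp ↦ ?_
    obtain ⟨hp, hpx⟩ := mem_filter.1 hp
    obtain ⟨hap, hpc⟩ := mem_Ico.1 hp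
    exact mem_filter.2 ⟨mem_univ p, (spans_iff_mem_Icc ha hb).2 ⟨hap, hpc.le.trans hlong⟩, hpx⟩
  omega

-- Shifting by `r` sends the elements of `s` below `b - r` to foreign positions.
lemma card_le_add_card_gaps (hf : ShiftSparse r f) {s : Finset (Fin L)} {b : Fin L}
    (hs : ∀ p ∈ s, f p = x) (hb : IsGreatest (s : Set (Fin L)) b) :
    #s ≤ r + #{q | f q ≠ x ∧ q < b ∧ ∃ p ∈ s, p ≤ q} := by
  have hfar : #{p ∈ s | p.val + r < b} ≤ #{q | f q ≠ x ∧ q < b ∧ ∃ p ∈ s, p ≤ q} := by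
    refine card_le_card_of_forall_subsingleton (fun p q : Fin L ↦ (q : ℕ) = p + r) (fun p hp ↦ ?_)
      fun q _ p hp p' hp' ↦ ?_
    · obtain ⟨hp, hpb⟩ := mem_filter.1 hp
      let q : Fin L := ⟨p + r, by omega⟩
      exact ⟨q, mem_filter.2 ⟨mem_univ q, fun hq ↦ hf p q rfl ((hs p hp).trans hq.symm), hpb,
        p, hp, Nat.le_add_right _ _⟩, rfl⟩
    · have hp := hp.2
      have hp' := hp'.2
      omega
  have hnear : #{p ∈ s | ¬ p.val + r < b} ≤ r := by
    calc #{p ∈ s | ¬ p.val + r < b} ≤ #(Ioc (b : ℕ) (b + r)) := by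
          refine card_le_card_of_injOn (fun p : Fin L ↦ (p : ℕ) + r) (fun p hp ↦ ?_)
            fun p _ q _ hpq ↦ Fin.ext (Nat.add_right_cancel hpq)
          obtain ⟨hp, hbp⟩ := mem_filter.1 hp
          have hne : (b : ℕ) ≠ p + r := fun h ↦ hf p b h ((hs p hp).trans (hs b hb.1).symm)
          have hpb : (p : ℕ) ≤ b := hb.2 hp
          simp only [coe_Ioc, Set.mem_Ioc]
          omega
      _ = r := by simp
  have hsplit := card_filter_add_card_filter_not (s := s) (fun p : Fin L ↦ (p : ℕ) + r < b)
  omega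

end ShiftSparse

section Discharging

variable {α : Type*} [DecidableEq α] {L r : ℕ} {f : Fin L → α} {x : α}

/-- What an occurrence of a letter of multiplicity `m` pays to each letter of multiplicity at least
three whose span contains it. It pays at most two of them, and as `3 + 2 * 5` and `2 * (3 + 2 * 2)`
are less than `15`, the letters of multiplicity one or two can afford this when `r ≥ 5`. -/
def weight (m : ℕ) : ℕ := (if m ≤ 2 then 2 else 0) + if m = 1 then 3 else 0

/-- What the letter `x` receives from the positions in its span. -/
def charge {ι : Type*} [LinearOrder ι] [Fintype ι] (f : ι → α) (x : α) : ℕ :=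
  ∑ p with Spans f x p, weight #(occurrences f (f p))

lemma charge_eq {ι : Type*} [LinearOrder ι] [Fintype ι] (f : ι → α) (x : α) :
    charge f x = 2 * #{p | Spans f x p ∧ #(occurrences f (f p)) ≤ 2} +
      3 * #{p | Spans f x p ∧ #(occurrences f (f p)) = 1} := by
  simp only [charge, weight, sum_add_distrib, ← sum_filter, sum_const, filter_filter, smul_eq_mul,
    mul_comm]

lemma sum_charge_le {ι : Type*} [LinearOrder ι] [Fintype ι] {f : ι → α} (hf : AbbaFree f) :
    ∑ x ∈ univ.image f with 3 ≤ #(occurrences f x), charge f x ≤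
      2 * ∑ p, weight #(occurrences f (f p)) := by
  calc ∑ x ∈ univ.image f with 3 ≤ #(occurrences f x), charge f x
      = ∑ p, ∑ _x ∈ heavySpanning f p, weight #(occurrences f (f p)) := by
        refine sum_comm' fun _ _ ↦ ?_
        simp only [heavySpanning, mem_filter, mem_univ, true_and, and_true, and_assoc]
    _ = ∑ p, #(heavySpanning f p) * weight #(occurrences f (f p)) := by
        simp only [sum_const, smul_eq_mul]
    _ ≤ ∑ p, 2 * weight #(occurrences f (f p)) :=
        sum_le_sum fun p _ ↦ Nat.mul_le_mul_right _ (hf.card_heavySpanning_le_two p)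
    _ = 2 * ∑ p, weight #(occurrences f (f p)) := (mul_sum ..).symm

lemma sum_weight_eq {ι : Type*} [Fintype ι] (f : ι → α) :
    ∑ p, weight #(occurrences f (f p)) =
      ∑ x ∈ univ.image f, #(occurrences f x) * weight #(occurrences f x) :=
  sum_comp (fun x ↦ weight #(occurrences f x)) f

lemma le_card_light (hfree : AbbaFree f) (hsparse : ShiftSparse r f)
    (hthree : 3 ≤ #(occurrences f x)) (hx : r < #(occurrences f x)) :
    r ≤ #{p | Spans f x p ∧ #(occurrences f (f p)) ≤ 2} + 2 := by
  have hcover : ({p | Spans f x p ∧ f p ≠ x} : Finset (Fin L)) ⊆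
      ({p | Spans f x p ∧ #(occurrences f (f p)) ≤ 2} : Finset (Fin L)) ∪ heavyForeign f x := by
    intro p hp
    simp only [heavyForeign, mem_union, mem_filter, mem_univ, true_and] at hp ⊢
    rcases le_or_gt #(occurrences f (f p)) 2 with hlight | hheavy
    · exact .inl ⟨hp.1, hlight⟩
    · exact .inr ⟨hp.1, hp.2, hheavy⟩
  calc r ≤ #{p | Spans f x p ∧ f p ≠ x} := hsparse.le_card_foreign hx
    _ ≤ #{p | Spans f x p ∧ #(occurrences f (f p)) ≤ 2} + #(heavyForeign f x) :=
      (card_le_card hcover).trans (card_union_le _ _)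
    _ ≤ _ := Nat.add_le_add_left (hfree.card_heavyForeign_le_two hthree) _

lemma card_occurrences_le_add_card_singletons (hfree : AbbaFree f) (hsparse : ShiftSparse r f)
    (x : α) :
    #(occurrences f x) ≤ r + 2 + #{p | Spans f x p ∧ #(occurrences f (f p)) = 1} := by
  rcases le_or_gt #(occurrences f x) 2 with hfew | hmany
  · omega
  obtain ⟨a, b, ha, hb⟩ := exists_isLeast_isGreatest_occurrences (by omega : 0 < #(occurrences f x))
  let inner := occurrences f x \ {a, b}
  have hcard : #(occurrences f x) ≤ #inner + 2 :=
    card_le_card_sdiff_add_card.trans (Nat.add_le_add_left card_le_two _)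
  have mem_inner : ∀ p ∈ inner, a < p ∧ p < b ∧ f p = x := fun p hp ↦ by
    simp only [inner, mem_sdiff, mem_insert, mem_singleton, not_or] at hp
    obtain ⟨hp, hpa, hpb⟩ := hp
    exact ⟨(ha.2 hp).lt_of_ne' hpa, (hb.2 hp).lt_of_ne hpb, mem_occurrences.1 hp⟩
  have hinner : inner.Nonempty := card_pos.1 (by omega)
  have hmax := isGreatest_max' inner hinner
  have hgaps := hsparse.card_le_add_card_gaps (fun p hp ↦ (mem_inner p hp).2.2) hmax
  have hsingle : ({q | f q ≠ x ∧ q < inner.max' hinner ∧ ∃ p ∈ inner, p ≤ q} : Finset (Fin L)) ⊆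
      ({p | Spans f x p ∧ #(occurrences f (f p)) = 1} : Finset (Fin L)) := by
    intro q hq
    obtain ⟨-, hqx, hqmax, p, hp, hpq⟩ := mem_filter.1 hq
    obtain ⟨hap, -, hpx⟩ := mem_inner p hp
    obtain ⟨-, hmaxb, hmaxx⟩ := mem_inner _ hmax.1
    have hpq' : p < q := hpq.lt_of_ne (by rintro rfl; exact hqx hpx)
    refine mem_filter.2 ⟨mem_univ q, (spans_iff_mem_Icc ha hb).2
      ⟨(hap.trans hpq').le, (hqmax.trans hmaxb).le⟩, card_eq_one.2 ⟨q, ?_⟩⟩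
    refine eq_singleton_iff_unique_mem.2 ⟨mem_occurrences.2 rfl, fun s hs ↦ ?_⟩
    exact (hfree.eq_of_mem_inner_gap hap hpq' hqmax hmaxb (mem_occurrences.1 ha.1) hpx hmaxx
      (mem_occurrences.1 hb.1) hqx (mem_occurrences.1 hs).symm).symm
  have := card_le_card hsingle
  omega

lemma three_mul_card_occurrences_le (hfree : AbbaFree f) (hsparse : ShiftSparse r f) (hr : 5 ≤ r)
    (x : α) : 3 * #(occurrences f x) ≤ 3 * r + charge f x := by
  rw [charge_eq]
  rcases le_or_gt #(occurrences f x) r with hle | hlt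
  · omega
  -- As `r ≥ 5`, there are at least three positions of multiplicity at most two in the span; they
  -- contribute `3 * 2` to the charge, which pays for the `2` in the second bound.
  have := le_card_light hfree hsparse (by omega) hlt
  have := card_occurrences_le_add_card_singletons hfree hsparse x
  omega

lemma three_mul_add_two_mul_weight_lt {m : ℕ} (hm : m ≤ 2) (hr : 5 ≤ r) :
    3 * m + 2 * (m * weight m) < 3 * r := by
  have : 3 * m + 2 * (m * weight m) < 15 := by decide +revert
  omega

lemma weight_eq_zero {m : ℕ} (hm : 3 ≤ m) : weight m = 0 := by
  simp only [weight]
  split_ifs <;> omega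

lemma three_mul_add_two_mul_weight_le_add_charge (hfree : AbbaFree f) (hsparse : ShiftSparse r f)
    (hr : 5 ≤ r) (x : α) :
    3 * #(occurrences f x) + 2 * (#(occurrences f x) * weight #(occurrences f x)) ≤
      3 * r + if 3 ≤ #(occurrences f x) then charge f x else 0 := by
  split_ifs with hx
  · rw [weight_eq_zero hx]
    exact three_mul_card_occurrences_le hfree hsparse hr x
  · exact (three_mul_add_two_mul_weight_lt (by omega) hr).le

lemma sum_card_occurrences (f : Fin L → α) : ∑ x ∈ univ.image f, #(occurrences f x) = L :=
  (card_eq_sum_card_image f univ).symm.trans (card_fin L)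

lemma three_mul_add_two_mul_weight_eq_add_charge (hfree : AbbaFree f) (hsparse : ShiftSparse r f)
    (hr : 5 ≤ r) (hL : r * #(univ.image f) ≤ L) (p : Fin L) :
    3 * #(occurrences f (f p)) + 2 * (#(occurrences f (f p)) * weight #(occurrences f (f p))) =
      3 * r + if 3 ≤ #(occurrences f (f p)) then charge f (f p) else 0 := by
  have hle := fun x (_ : x ∈ univ.image f) ↦
    three_mul_add_two_mul_weight_le_add_charge hfree hsparse hr x
  refine (sum_eq_sum_iff_of_le hle).1 (le_antisymm (sum_le_sum hle) ?_) _
    (mem_image_of_mem f (mem_univ p))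
  have hcharge := sum_charge_le hfree
  rw [sum_weight_eq] at hcharge
  rw [mul_comm] at hL
  rw [mul_sum] at hcharge
  rw [sum_add_distrib, sum_add_distrib, ← mul_sum, ← mul_sum, sum_card_occurrences, sum_const,
    smul_eq_mul, ← sum_filter]
  linarith

lemma card_occurrences_eq (hfree : AbbaFree f) (hsparse : ShiftSparse r f) (hr : 5 ≤ r)
    (hL : r * #(univ.image f) ≤ L) (p : Fin L) : #(occurrences f (f p)) = r := by
  have heq := three_mul_add_two_mul_weight_eq_add_charge hfree hsparse hr hL
  have hheavy : ∀ q, 3 ≤ #(occurrences f (f q)) := by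
    intro q
    by_contra! hlight
    have := three_mul_add_two_mul_weight_lt (Nat.le_of_lt_succ hlight) hr
    have := heq q
    rw [if_neg (by omega)] at this
    omega
  have hcharge : charge f (f p) = 0 := sum_eq_zero fun q _ ↦ weight_eq_zero (hheavy q)
  have := heq p
  rw [if_pos (hheavy p), hcharge, weight_eq_zero (hheavy p)] at this
  omega

end Discharging

section Blocks

variable {α : Type*} [DecidableEq α] {L r : ℕ} {f : Fin L → α}

lemma eq_iff_mem_block (hfree : AbbaFree f) (hsparse : ShiftSparse r f) (hr : 3 ≤ r)
    (hmult : ∀ p, #(occurrences f (f p)) = r) {a : Fin L} (hcut : ∀ p < a, ∀ q ≥ a, f p ≠ f q)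
    (q : Fin L) : f q = f a ↔ a ≤ q ∧ (q : ℕ) < a + r := by
  obtain ⟨-, b, -, hb⟩ := exists_isLeast_isGreatest_occurrences (card_occurrences_pos f a)
  have ha : IsLeast (occurrences f (f a) : Set (Fin L)) a :=
    isLeast_occurrences_of_cut hcut
  have hspan {p : Fin L} : Spans f (f a) p ↔ a ≤ p ∧ p ≤ b := spans_iff_mem_Icc ha hb
  have hab : (a : ℕ) ≤ b := ha.2 hb.1
  have hown : #{p ∈ Icc a b | f p = f a} = r := by
    rw [← hmult a]
    congr 1
    ext p
    rw [mem_filter, mem_occurrences, mem_Icc, and_iff_right_iff_imp]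
    exact fun hp ↦ ⟨ha.2 (mem_occurrences.2 hp), hb.2 (mem_occurrences.2 hp)⟩
  have hforeign : #{p ∈ Icc a b | f p ≠ f a} ≤ 1 := by
    refine (card_le_card fun p hp ↦ ?_).trans
      (hfree.card_heavyForeign_le_one (hr.trans_eq (hmult a).symm) hcut)
    obtain ⟨hp, hpa⟩ := mem_filter.1 hp
    exact mem_filter.2 ⟨mem_univ p, hspan.2 (mem_Icc.1 hp), hpa, hr.trans_eq (hmult p).symm⟩
  have hlength : #{p ∈ Icc a b | f p = f a} + #{p ∈ Icc a b | f p ≠ f a} = b + 1 - a := by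
    rw [card_filter_add_card_filter_not, Fin.card_Icc]
  have hne : (b : ℕ) ≠ a + r := fun h ↦ hsparse a b h (mem_occurrences.1 hb.1).symm
  have hempty : #{p ∈ Icc a b | f p ≠ f a} = 0 := by omega
  constructor
  · intro hq
    have hqb : (q : ℕ) ≤ b := hb.2 (mem_occurrences.2 hq)
    exact ⟨ha.2 (mem_occurrences.2 hq), by omega⟩
  · rintro ⟨haq, hqr⟩
    by_contra hqa
    have hqb : q ≤ b := Fin.le_def.2 (by omega)
    exact notMem_empty q (card_eq_zero.1 hempty ▸ mem_filter.2 ⟨mem_Icc.2 ⟨haq, hqb⟩, hqa⟩)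

lemma ne_of_lt_mul_le (hfree : AbbaFree f) (hsparse : ShiftSparse r f) (hr : 3 ≤ r)
    (hmult : ∀ p, #(occurrences f (f p)) = r) (m : ℕ) {p q : Fin L} (hp : (p : ℕ) < m * r)
    (hq : m * r ≤ q) : f p ≠ f q := by
  induction m generalizing p q with
  | zero => omega
  | succ m ih =>
    rw [Nat.succ_mul] at hp hq
    let a : Fin L := ⟨m * r, by omega⟩
    rcases lt_or_ge (p : ℕ) (m * r) with hpm | hmp
    · exact ih hpm (by omega)
    have hblock := eq_iff_mem_block hfree hsparse hr hmult (a := a) fun _ hs _ ht ↦ ih hs ht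
    have hpa : f p = f a := (hblock p).2 ⟨hmp, hp⟩
    exact fun hpq ↦ hq.not_gt ((hblock q).1 (hpq.symm.trans hpa)).2

lemma eq_iff_div_eq (hfree : AbbaFree f) (hsparse : ShiftSparse r f) (hr : 3 ≤ r)
    (hmult : ∀ p, #(occurrences f (f p)) = r) (p q : Fin L) :
    f p = f q ↔ (p : ℕ) / r = q / r := by
  have hqr : (q : ℕ) / r * r ≤ q := Nat.div_mul_le_self q r
  let a : Fin L := ⟨q / r * r, by omega⟩
  have hblock := eq_iff_mem_block hfree hsparse hr hmult (a := a) fun _ hs _ ht ↦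
    ne_of_lt_mul_le hfree hsparse hr hmult (q / r) hs ht
  have hqa : f q = f a := (hblock q).2 ⟨hqr, Nat.lt_div_mul_add (by omega)⟩
  rw [hqa, hblock, Nat.div_eq_iff (by omega), Fin.le_def]
  simp only [a]
  omega

end Blocks

lemma exists_perm_comp_eq {ι α : Type*} [Finite ι] [Infinite α] {f g : ι → α}
    (h : ∀ i j, f i = f j ↔ g i = g j) : ∃ β : α ≃ α, ∀ i, β (f i) = g i := by
  let e : Set.range f ↪ α :=
    ⟨fun x ↦ g x.2.choose, fun x y hxy ↦ Subtype.ext <| by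
      rw [← x.2.choose_spec, ← y.2.choose_spec]
      exact (h _ _).2 hxy⟩
  have hlt : Cardinal.mk (Set.range f) < Cardinal.mk α :=
    (Cardinal.lt_aleph0_of_finite _).trans_le (Cardinal.aleph0_le_mk α)
  obtain ⟨β, hβ⟩ := Cardinal.extend_function_of_lt e hlt ⟨Equiv.refl α⟩
  refine ⟨β, fun i ↦ (hβ ⟨f i, i, rfl⟩).trans ((h _ _).1 ?_)⟩
  exact Exists.choose_spec (⟨i, rfl⟩ : f i ∈ Set.range f)

lemma abbaFree_get {a b : ℕ} (hab : a ≠ b) {u : List ℕ} (hu : ¬ Contains u [a, b, b, a]) :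
    AbbaFree u.get := by
  intro p q s t hpq hqs hst hpt hqs'
  by_contra! hne
  obtain ⟨β, hβ⟩ := exists_perm_comp_eq (f := ![u.get p, u.get q]) (g := ![a, b])
    (by simp [-List.get_eq_getElem, Fin.forall_fin_two, hne, hab, hab.symm, Ne.symm hne])
  obtain ⟨ha, hb⟩ : β (u.get p) = a ∧ β (u.get q) = b := ⟨hβ 0, hβ 1⟩
  refine hu ⟨[p, q, s, t].map u.get, List.map_getElem_sublist (by simp; omega), β, ?_⟩
  simp only [List.map_cons, List.map_nil, ← hpt, ← hqs', ha, hb]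

lemma ArithSparse.shiftSparse_get {k r : ℕ} {u : List ℕ} (hu : ArithSparse k r u) (hk : 2 ≤ k) :
    ShiftSparse r u.get := by
  intro i j hij
  simpa [← hij] using hu i 0 1 one_pos hk (by omega)

lemma blocks_eq_map_range (n : ℕ) {r : ℕ} (hr : 0 < r) :
    Blocks n r = (List.range (n * r)).map (· / r + 1) := by
  induction n with
  | zero => simp [Blocks]
  | succ n ih =>
    have hlast : (List.range r).map (fun i ↦ (n * r + i) / r + 1) = List.replicate r (n + 1) := by
      refine List.eq_replicate_iff.2 ⟨by simp, fun c hc ↦ ?_⟩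
      obtain ⟨i, hi, rfl⟩ := List.mem_map.1 hc
      rw [mul_comm n r, Nat.mul_add_div hr, Nat.div_eq_of_lt (List.mem_range.1 hi)]
    rw [Nat.succ_mul, List.range_add, List.map_append, ← ih, List.map_map]
    simp [Blocks, List.range_succ, hlast, Function.comp_def]

lemma isomorphic_blocks {u : List ℕ} {n r : ℕ} (hr : 0 < r) (hlen : u.length = r * n)
    (hu : ∀ p q, u.get p = u.get q ↔ (p : ℕ) / r = q / r) : Isomorphic u (Blocks n r) := by
  obtain ⟨β, hβ⟩ := exists_perm_comp_eq (f := u.get) (g := fun p ↦ (p : ℕ) / r + 1)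
    (fun p q ↦ (hu p q).trans (Nat.add_right_cancel_iff (n := 1)).symm)
  refine ⟨β, ?_⟩
  rw [blocks_eq_map_range n hr]
  refine List.ext_getElem (by simp [hlen, mul_comm]) fun p _ hp ↦ ?_
  simpa using (hβ ⟨p, by simpa using hp⟩).symm

theorem stmt_16_general (a b : ℕ) (hab : a ≠ b) (k r n : ℕ) (hk : 2 ≤ k) (hr : 5 ≤ r)
    (u : List ℕ) (hfree : ¬ Contains u [a, b, b, a]) (hsparse : ArithSparse k r u)
    (hcard : u.toFinset.card ≤ n) (hlen : r * n ≤ u.length) : Isomorphic u (Blocks n r) := by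
  have hfree' : AbbaFree u.get := abbaFree_get hab hfree
  have hsparse' : ShiftSparse r u.get := hsparse.shiftSparse_get hk
  have hletters : #(univ.image u.get) ≤ n := by
    convert hcard
    ext x
    simp [List.mem_iff_get]
  have hmult : ∀ p, #(occurrences u.get (u.get p)) = r :=
    card_occurrences_eq hfree' hsparse' hr ((Nat.mul_le_mul_left r hletters).trans hlen)
  have hlen' : u.length = r * n := by
    refine le_antisymm ?_ hlen
    calc u.length = ∑ x ∈ univ.image u.get, #(occurrences u.get x) :=
          (sum_card_occurrences u.get).symm
      _ = #(univ.image u.get) * r := sum_const_nat fun x hx ↦ by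
          obtain ⟨p, -, rfl⟩ := mem_image.1 hx
          exact hmult p
      _ ≤ r * n := by rw [mul_comm]; exact Nat.mul_le_mul_left r hletters
  exact isomorphic_blocks (by omega) hlen' (eq_iff_div_eq hfree' hsparse' (by omega) hmult)

theorem stmt_16 (a b : ℕ) (hab : a ≠ b) (k r n : ℕ) (hk : 2 ≤ k) (hr : 5 ≤ r)
    (hn : 1 ≤ n) (u : List ℕ) (hfree : ¬ Contains u [a, b, b, a])
    (hsparse : ArithSparse k r u) (hcard : u.toFinset.card ≤ n)
    (hlen : u.length = r * n) :
    Isomorphic u (Blocks n r) :=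
  stmt_16_general a b hab k r n hk hr u hfree hsparse hcard hlen.ge
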